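/- Under the assumptions π(x) ≤ C_π η(x) (η the standard normal density on ℝ^d) and g the modified soft-plus g(ξ) = log(2^ξ+1)/log 2, the objective L_k(f) = E_π[ (1/2)(f(X_{<k},0) + ∫_0^{X_k} g(∂ₖ f(X_{<k},t)) dt)² − log g(∂ₖ f(X_{1:k})) ] is finite for every f ∈ H^{1,k}(ℝ^k). -/

import Mathlib

open MeasureTheory Set

/-- The modified soft-plus function `g(ξ) = log(2^ξ + 1) / log 2`. -/
noncomputable def softg (ξ : ℝ) : ℝ := Real.log ((2 : ℝ) ^ ξ + 1) / Real.log 2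

/-- The standard Gaussian density on `ℝ^d`. -/
noncomputable def gaussDensity (d : ℕ) (x : Fin d → ℝ) : ℝ :=
  (2 * Real.pi) ^ (-(d : ℝ) / 2) * Real.exp (-(∑ i, x i ^ 2) / 2)

/-- The rectified map `R_k(f)(x) = f(x_{<k},0) + ∫_0^{x_k} g(∂ₖ f(x_{<k},t)) dt`,
where `f'` denotes the partial derivative of `f` in the last coordinate. -/
noncomputable def rectifiedMap (k : ℕ) (f f' : (Fin (k + 1) → ℝ) → ℝ)
    (x : Fin (k + 1) → ℝ) : ℝ :=
  f (Function.update x (Fin.last k) 0) +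
    ∫ t in (0 : ℝ)..(x (Fin.last k)), softg (f' (Function.update x (Fin.last k) t))

/-!
For almost every `z`, the slice `t ↦ f (z, t)` lies in `H¹(ℝ)`, so the one-dimensional trace
inequality bounds `f (z, 0) ^ 2` by its energy `∫ f (z, t) ^ 2 + f' (z, t) ^ 2 dt`. Since
`softg ξ ≤ 1 + |ξ|`, Cauchy–Schwarz bounds the square of the integral over `(0, s)` by a multiple of
`1 + s ^ 2` times the same energy plus a constant. The weight `1 + s ^ 2` is Gaussian-integrable,
and the energy is integrable in `z` because the Gaussian density is at most `1`. The logarithmic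
term is controlled by `|log (softg ξ)| ≤ |ξ|`, and `p ≤ Cπ * gaussDensity` transfers integrability
from the Gaussian measure to the target.
-/

open ProbabilityTheory

section SoftPlus

lemma softg_pos (ξ : ℝ) : 0 < softg ξ := by
  have hpow : (0 : ℝ) < 2 ^ ξ := by positivity
  exact div_pos (Real.log_pos (by linarith)) (Real.log_pos one_lt_two)

lemma softg_le_one_add_abs (ξ : ℝ) : softg ξ ≤ 1 + |ξ| := by
  have hmono : (2 : ℝ) ^ ξ ≤ 2 ^ |ξ| :=
    Real.rpow_le_rpow_of_exponent_le one_le_two (le_abs_self ξ)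
  have hone : (1 : ℝ) ≤ 2 ^ |ξ| := Real.one_le_rpow one_le_two (abs_nonneg ξ)
  rw [softg, div_le_iff₀ (Real.log_pos one_lt_two), ← Real.log_rpow two_pos]
  refine Real.log_le_log (by positivity) ?_
  rw [Real.rpow_add two_pos, Real.rpow_one]
  linarith

lemma two_rpow_neg_abs_le_softg (ξ : ℝ) : (2 : ℝ) ^ (-|ξ|) ≤ softg ξ := by
  have hpow : (2 : ℝ) ^ (-|ξ|) ≤ 1 :=
    Real.rpow_le_one_of_one_le_of_nonpos one_le_two (neg_nonpos.2 (abs_nonneg ξ))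
  have hmono : (2 : ℝ) ^ (-|ξ|) ≤ 2 ^ ξ :=
    Real.rpow_le_rpow_of_exponent_le one_le_two (neg_abs_le ξ)
  have bernoulli : ((1 : ℝ) + 1) ^ (2 : ℝ) ^ (-|ξ|) ≤ 1 + 2 ^ (-|ξ|) * 1 :=
    rpow_one_add_le_one_add_mul_self (by norm_num) (by positivity) hpow
  rw [one_add_one_eq_two, mul_one] at bernoulli
  rw [softg, le_div_iff₀ (Real.log_pos one_lt_two), ← Real.log_rpow two_pos]
  exact Real.log_le_log (by positivity) (by linarith)

lemma abs_log_softg_le_abs (ξ : ℝ) : |Real.log (softg ξ)| ≤ |ξ| := by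
  refine abs_le.2 ⟨?_, ?_⟩
  · have hlog := Real.log_le_log (by positivity) (two_rpow_neg_abs_le_softg ξ)
    rw [Real.log_rpow two_pos] at hlog
    nlinarith [abs_nonneg ξ, Real.log_two_lt_d9]
  · linarith [Real.log_le_sub_one_of_pos (softg_pos ξ), softg_le_one_add_abs ξ]

lemma measurable_softg : Measurable softg := by
  unfold softg
  fun_prop

lemma integrable_log_softg {α : Type*} [MeasurableSpace α] {μ : Measure α} {h : α → ℝ}
    (hh : Integrable h μ) : Integrable (fun a => Real.log (softg (h a))) μ :=
  hh.mono
    (Real.measurable_log.comp measurable_softg |>.comp_aemeasurable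
      hh.aemeasurable).aestronglyMeasurable
    (ae_of_all _ fun a => abs_log_softg_le_abs (h a))

end SoftPlus

section OneDimensional

lemma sq_integral_le_measureReal_univ_mul_integral_sq {α : Type*} [MeasurableSpace α]
    {μ : Measure α} [IsFiniteMeasure μ] {ψ : α → ℝ} (hψ : MemLp ψ 2 μ) :
    (∫ a, ψ a ∂μ) ^ 2 ≤ μ.real univ * ∫ a, ψ a ^ 2 ∂μ := by
  rcases eq_zero_or_neZero μ with rfl | _
  · simp
  have jensen : (⨍ a, ψ a ∂μ) ^ 2 ≤ ⨍ a, ψ a ^ 2 ∂μ :=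
    (even_two.convexOn_pow (𝕜 := ℝ)).map_average_le (by fun_prop) isClosed_univ (by simp)
      (hψ.integrable one_le_two) hψ.integrable_sq
  have hμ : 0 < μ.real univ := measureReal_univ_pos
  rw [average_eq, average_eq, smul_eq_mul, smul_eq_mul, mul_pow, inv_pow,
    inv_mul_le_iff₀ (by positivity)] at jensen
  calc (∫ a, ψ a ∂μ) ^ 2
      ≤ μ.real univ ^ 2 * ((μ.real univ)⁻¹ * ∫ a, ψ a ^ 2 ∂μ) := jensen
    _ = μ.real univ * ∫ a, ψ a ^ 2 ∂μ := by field_simp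

lemma sq_intervalIntegral_le_abs_sub_mul_setIntegral_sq {ψ : ℝ → ℝ} {a b : ℝ}
    (hψ : MemLp ψ 2 (volume.restrict (uIoc a b))) :
    (∫ t in a..b, ψ t) ^ 2 ≤ |b - a| * ∫ t in uIoc a b, ψ t ^ 2 := by
  have : IsFiniteMeasure (volume.restrict (uIoc a b)) := ⟨by simp [Real.volume_uIoc]⟩
  rw [← sq_abs, intervalIntegral.abs_integral_eq_abs_integral_uIoc, sq_abs]
  simpa [Measure.real, Real.volume_uIoc] using
    sq_integral_le_measureReal_univ_mul_integral_sq hψ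

lemma sq_intervalIntegral_le_of_abs_le_one_add_abs {u ψ : ℝ → ℝ}
    (hψ : AEStronglyMeasurable ψ) (hu : MemLp u 2) (hle : ∀ t, |ψ t| ≤ 1 + |u t|) (a b : ℝ) :
    (∫ t in a..b, ψ t) ^ 2 ≤ 2 * (b - a) ^ 2 + 2 * |b - a| * ∫ t, u t ^ 2 := by
  have : IsFiniteMeasure (volume.restrict (uIoc a b)) := ⟨by simp [Real.volume_uIoc]⟩
  have hone : MemLp (fun _ : ℝ => (1 : ℝ)) 2 (volume.restrict (uIoc a b)) := memLp_const 1
  have habs : MemLp (fun t => |u t|) 2 (volume.restrict (uIoc a b)) := hu.restrict _ |>.norm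
  have hbound : MemLp (fun t => 1 + |u t|) 2 (volume.restrict (uIoc a b)) := hone.add habs
  have hψ2 : MemLp ψ 2 (volume.restrict (uIoc a b)) :=
    hbound.mono hψ.restrict (ae_of_all _ fun t => (hle t).trans (le_abs_self _))
  have hsq : ∀ t, ψ t ^ 2 ≤ 2 + 2 * u t ^ 2 := fun t => by
    have hsq_abs := sq_le_sq' (by linarith [abs_nonneg (ψ t), hle t]) (hle t)
    nlinarith [sq_abs (ψ t), sq_abs (u t), sq_nonneg (|u t| - 1)]
  have hu2 : Integrable (fun t => 2 * u t ^ 2) := hu.integrable_sq.const_mul 2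
  have hset : ∫ t in uIoc a b, u t ^ 2 ≤ ∫ t, u t ^ 2 :=
    setIntegral_le_integral hu.integrable_sq (ae_of_all _ fun t => sq_nonneg (u t))
  calc (∫ t in a..b, ψ t) ^ 2
      ≤ |b - a| * ∫ t in uIoc a b, ψ t ^ 2 :=
        sq_intervalIntegral_le_abs_sub_mul_setIntegral_sq hψ2
    _ ≤ |b - a| * ∫ t in uIoc a b, (2 + 2 * u t ^ 2) :=
        mul_le_mul_of_nonneg_left
          (integral_mono hψ2.integrable_sq ((integrable_const 2).add hu2.restrict) hsq)
          (abs_nonneg _)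
    _ = |b - a| * (2 * |b - a| + 2 * ∫ t in uIoc a b, u t ^ 2) := by
        rw [integral_add (integrable_const 2) hu2.restrict, integral_const_mul]
        simp [Measure.real, Real.volume_uIoc, mul_comm]
    _ ≤ |b - a| * (2 * |b - a| + 2 * ∫ t, u t ^ 2) := by
        gcongr |b - a| * (2 * |b - a| + 2 * ?_)
    _ = 2 * (b - a) ^ 2 + 2 * |b - a| * ∫ t, u t ^ 2 := by
        rw [← sq_abs (b - a)]
        ring

variable {φ φ' : ℝ → ℝ}

lemma sq_apply_le_integral_sq_add_integral_deriv_sq (hderiv : ∀ t, HasDerivAt φ (φ' t) t)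
    (hφ : MemLp φ 2) (hφ' : MemLp φ' 2) (a : ℝ) :
    φ a ^ 2 ≤ (∫ t, φ t ^ 2) + ∫ t, φ' t ^ 2 := by
  have hderiv_sq : ∀ t, HasDerivAt (fun r => φ r ^ 2) (2 * (φ t * φ' t)) t := fun t => by
    convert! (hderiv t).fun_pow 2 using 1
    ring
  have hint : Integrable (fun t => 2 * (φ t * φ' t)) := (hφ.integrable_mul hφ').const_mul 2
  have hsum : Integrable (fun t => φ t ^ 2 + φ' t ^ 2) := hφ.integrable_sq.add hφ'.integrable_sq
  have hlim := tendsto_zero_of_hasDerivAt_of_integrableOn_Ioi (a := a)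
    (fun t _ => hderiv_sq t) hint.integrableOn hφ.integrable_sq.integrableOn
  have ftc : ∫ t in Ioi a, 2 * (φ t * φ' t) = 0 - φ a ^ 2 :=
    integral_Ioi_of_hasDerivAt_of_tendsto' (fun t _ => hderiv_sq t) hint.integrableOn hlim
  calc φ a ^ 2 = ∫ t in Ioi a, -(2 * (φ t * φ' t)) := by
        rw [integral_neg, ftc, zero_sub, neg_neg]
    _ ≤ ∫ t in Ioi a, (φ t ^ 2 + φ' t ^ 2) :=
        setIntegral_mono hint.neg.integrableOn hsum.integrableOn fun t => by
          nlinarith [sq_nonneg (φ t + φ' t)]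
    _ ≤ ∫ t, (φ t ^ 2 + φ' t ^ 2) :=
        setIntegral_le_integral hsum (ae_of_all _ fun t => by positivity)
    _ = (∫ t, φ t ^ 2) + ∫ t, φ' t ^ 2 := integral_add hφ.integrable_sq hφ'.integrable_sq

lemma sq_add_intervalIntegral_le (hderiv : ∀ t, HasDerivAt φ (φ' t) t)
    (hφ : MemLp φ 2) (hφ' : MemLp φ' 2) {ψ : ℝ → ℝ} (hψ : AEStronglyMeasurable ψ)
    (hle : ∀ t, |ψ t| ≤ 1 + |φ' t|) (s : ℝ) :
    (φ 0 + ∫ t in (0 : ℝ)..s, ψ t) ^ 2 ≤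
      (1 + s ^ 2) * (2 * (∫ t, φ t ^ 2) + 4 * (∫ t, φ' t ^ 2) + 4) := by
  have hA : 0 ≤ ∫ t, φ t ^ 2 := integral_nonneg fun t => sq_nonneg (φ t)
  have hB : 0 ≤ ∫ t, φ' t ^ 2 := integral_nonneg fun t => sq_nonneg (φ' t)
  have htrace := sq_apply_le_integral_sq_add_integral_deriv_sq hderiv hφ hφ' 0
  have hgrowth := sq_intervalIntegral_le_of_abs_le_one_add_abs hψ hφ' hle 0 s
  rw [sub_zero] at hgrowth
  have hs : 2 * |s| * ∫ t, φ' t ^ 2 ≤ (1 + s ^ 2) * ∫ t, φ' t ^ 2 := by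
    gcongr
    nlinarith [sq_abs s, sq_nonneg (|s| - 1)]
  nlinarith [add_sq_le (a := φ 0) (b := ∫ t in (0 : ℝ)..s, ψ t),
    mul_nonneg (sq_nonneg s) hA, mul_nonneg (sq_nonneg s) hB]

end OneDimensional

section ProductMeasures

lemma pi_withDensity_ofReal {ι : Type*} [Fintype ι] {α : ι → Type*} [∀ i, MeasurableSpace (α i)]
    {μ : ∀ i, Measure (α i)} [∀ i, SigmaFinite (μ i)] {q : ∀ i, α i → ℝ}
    (hq : ∀ i, Integrable (q i) (μ i)) (hq0 : ∀ i a, 0 ≤ q i a) :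
    Measure.pi (fun i => (μ i).withDensity fun a => ENNReal.ofReal (q i a)) =
      (Measure.pi μ).withDensity fun x => ENNReal.ofReal (∏ i, q i (x i)) := by
  refine Measure.pi_eq fun s hs => ?_
  have hprod : Integrable (fun x => ∏ i, q i (x i))
      (Measure.pi fun i => (μ i).restrict (s i)) :=
    Integrable.fintype_prod_dep fun i => (hq i).restrict
  rw [withDensity_apply _ (MeasurableSet.univ_pi hs), Measure.restrict_pi_pi,
    ← ofReal_integral_eq_lintegral_ofReal hprod
      (ae_of_all _ fun x => Finset.prod_nonneg fun i _ => hq0 i (x i)),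
    integral_fintype_prod_eq_prod,
    ENNReal.ofReal_prod_of_nonneg fun i _ => integral_nonneg (hq0 i)]
  refine Finset.prod_congr rfl fun i _ => ?_
  rw [withDensity_apply _ (hs i),
    ofReal_integral_eq_lintegral_ofReal (hq i).restrict (ae_of_all _ (hq0 i))]

lemma measurePreserving_pi_comp_injective {ι κ Ω : Type*} [Fintype ι] [Fintype κ]
    [MeasurableSpace Ω] (μ : Measure Ω) [IsProbabilityMeasure μ] {e : ι → κ}
    (he : Function.Injective e) :
    MeasurePreserving (fun (x : κ → Ω) i => x (e i))
      (Measure.pi fun _ => μ) (Measure.pi fun _ => μ) := by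
  refine ⟨by fun_prop, ?_⟩
  have hindep : iIndepFun (fun i (x : κ → Ω) => x (e i)) (Measure.pi fun _ => μ) :=
    (iIndepFun_pi (X := fun _ => id) fun _ => aemeasurable_id).precomp he
  rw [hindep.map_fun_eq_pi_map fun i => (measurable_pi_apply (e i)).aemeasurable]
  congr with i : 1
  exact (measurePreserving_eval (fun _ : κ => μ) (e i)).map_eq

lemma measurePreserving_snoc {Ω : Type*} [MeasurableSpace Ω] (μ : Measure Ω) [SigmaFinite μ]
    (k : ℕ) :
    MeasurePreserving (fun q : Ω × (Fin k → Ω) => (Fin.snoc q.2 q.1 : Fin (k + 1) → Ω))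
      (μ.prod (Measure.pi fun _ => μ)) (Measure.pi fun _ => μ) := by
  convert! (measurePreserving_piFinSuccAbove (fun _ => μ) (Fin.last k)).symm using 1
  ext q : 1
  exact (Fin.insertNth_last' q.1 q.2).symm

lemma integrable_mul_of_abs_le_density {α : Type*} [MeasurableSpace α] {μ : Measure α}
    {F p q : α → ℝ} {C : ℝ} (hp : Measurable p) (hq : Measurable q) (hq0 : ∀ x, 0 ≤ q x)
    (hle : ∀ x, |p x| ≤ C * q x)
    (hF : Integrable F (μ.withDensity fun x => ENNReal.ofReal (q x))) :
    Integrable (fun x => F x * p x) μ := by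
  have hFq : Integrable (fun x => F x * q x) μ := by
    simpa [ENNReal.toReal_ofReal, hq0] using
      (integrable_withDensity_iff hq.ennreal_ofReal (by simp)).1 hF
  refine (hFq.mul_bdd (c := |C|) (hp.div hq).aestronglyMeasurable
    (ae_of_all _ fun x => ?_)).congr (ae_of_all _ fun x => ?_)
  · rw [Real.norm_eq_abs, Pi.div_apply, abs_div, abs_of_nonneg (hq0 x)]
    exact div_le_of_le_mul₀ (hq0 x) (abs_nonneg C)
      ((hle x).trans (mul_le_mul_of_nonneg_right (le_abs_self C) (hq0 x)))
  · rcases eq_or_ne (q x) 0 with hqx | hqx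
    · have hpx : p x = 0 := by simpa [hqx] using hle x
      simp [hqx, hpx]
    · simp only [Pi.div_apply]
      field_simp

end ProductMeasures

section Gaussian

/-- The standard Gaussian measure on `Fin n → ℝ`, as a product of one-dimensional Gaussians;
Mathlib's `ProbabilityTheory.stdGaussian` lives on inner product spaces instead. -/
noncomputable abbrev stdGaussianPi (n : ℕ) : Measure (Fin n → ℝ) :=
  Measure.pi fun _ => gaussianReal 0 1

lemma gaussDensity_eq_prod_gaussianPDFReal (n : ℕ) (x : Fin n → ℝ) :
    gaussDensity n x = ∏ i, gaussianPDFReal 0 1 (x i) := by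
  have hconst : (2 * Real.pi) ^ (-((n : ℝ) / 2)) = (√(2 * Real.pi))⁻¹ ^ n := by
    rw [Real.sqrt_eq_rpow, ← Real.rpow_neg (by positivity), ← Real.rpow_mul_natCast (by positivity)]
    congr 1
    ring
  simp only [gaussDensity, hconst, gaussianPDFReal, NNReal.coe_one, mul_one, sub_zero,
    Finset.prod_mul_distrib, Finset.prod_const, Finset.card_univ, Fintype.card_fin,
    ← Real.exp_sum, neg_div, Finset.sum_neg_distrib, Finset.sum_div]

lemma gaussDensity_nonneg (n : ℕ) (x : Fin n → ℝ) : 0 ≤ gaussDensity n x := by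
  unfold gaussDensity
  positivity

lemma gaussDensity_le_one (n : ℕ) (x : Fin n → ℝ) : gaussDensity n x ≤ 1 := by
  have hpi : 1 ≤ 2 * Real.pi := by linarith [Real.pi_gt_three]
  have hsum : 0 ≤ ∑ i, x i ^ 2 := by positivity
  have hn : -(n : ℝ) / 2 ≤ 0 := by linarith [n.cast_nonneg (α := ℝ)]
  exact mul_le_one₀ (Real.rpow_le_one_of_one_le_of_nonpos hpi hn)
    (Real.exp_nonneg _) (Real.exp_le_one_iff.2 (by linarith))

lemma measurable_gaussDensity (n : ℕ) : Measurable (gaussDensity n) := by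
  unfold gaussDensity
  fun_prop

lemma stdGaussianPi_eq_withDensity (n : ℕ) :
    stdGaussianPi n = volume.withDensity fun x => ENNReal.ofReal (gaussDensity n x) := by
  simp_rw [gaussDensity_eq_prod_gaussianPDFReal, volume_pi, stdGaussianPi,
    gaussianReal_of_var_ne_zero 0 one_ne_zero, gaussianPDF_def]
  exact pi_withDensity_ofReal (fun _ => integrable_gaussianPDFReal 0 1)
    fun _ => gaussianPDFReal_nonneg 0 1

lemma stdGaussianPi_le_volume (n : ℕ) : stdGaussianPi n ≤ volume := by
  rw [stdGaussianPi_eq_withDensity]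
  refine (withDensity_mono (ae_of_all _ fun x => ?_)).trans_eq withDensity_one
  simpa using gaussDensity_le_one n x

end Gaussian

section RectifiedMap

lemma measurable_intervalIntegral {α : Type*} [MeasurableSpace α] {F : α → ℝ → ℝ} {a b : α → ℝ}
    (hF : Measurable F.uncurry) (ha : Measurable a) (hb : Measurable b) :
    Measurable fun x => ∫ t in a x..b x, F x t := by
  -- Substituting `t = a + (b - a) u` makes the domain of integration independent of `x`.
  have hsubst : ∀ x, ∫ t in a x..b x, F x t =
      (b x - a x) * ∫ u in Ioc (0 : ℝ) 1, F x (a x + (b x - a x) * u) := fun x => by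
    rw [← intervalIntegral.integral_of_le zero_le_one, ← smul_eq_mul,
      intervalIntegral.smul_integral_comp_add_mul]
    simp
  simp_rw [hsubst]
  have hmap : Measurable fun q : α × ℝ => (q.1, a q.1 + (b q.1 - a q.1) * q.2) := by fun_prop
  exact (hb.sub ha).mul (hF.comp hmap).stronglyMeasurable.integral_prod_right'.measurable

variable {k : ℕ} {f f' : (Fin (k + 1) → ℝ) → ℝ}

lemma measurable_rectifiedMap (hf : Measurable f) (hf' : Measurable f') :
    Measurable (rectifiedMap k f f') := by
  have hupdate := measurable_update' (X := fun _ : Fin (k + 1) => ℝ) (a := Fin.last k)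
  exact (hf.comp (hupdate.comp (measurable_id.prodMk measurable_const))).add
    (measurable_intervalIntegral (measurable_softg.comp (hf'.comp hupdate)) measurable_const
      (measurable_pi_apply _))

lemma rectifiedMap_snoc (z : Fin k → ℝ) (s : ℝ) :
    rectifiedMap k f f' (Fin.snoc z s) =
      f (Fin.snoc z 0) + ∫ t in (0 : ℝ)..s, softg (f' (Fin.snoc z t)) := by
  simp only [rectifiedMap, Fin.update_snoc_last (α := fun _ => ℝ), Fin.snoc_last]

lemma rectifiedMap_snoc_sq_le
    (hderiv : ∀ x, HasDerivAt (fun t => f (Function.update x (Fin.last k) t)) (f' x)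
      (x (Fin.last k)))
    (z : Fin k → ℝ) (hfz : MemLp (fun t => f (Fin.snoc z t)) 2)
    (hf'z : MemLp (fun t => f' (Fin.snoc z t)) 2) (s : ℝ) :
    rectifiedMap k f f' (Fin.snoc z s) ^ 2 ≤
      (1 + s ^ 2) *
        (2 * (∫ t, f (Fin.snoc z t) ^ 2) + 4 * (∫ t, f' (Fin.snoc z t) ^ 2) + 4) := by
  rw [rectifiedMap_snoc]
  refine sq_add_intervalIntegral_le (fun t => ?_) hfz hf'z ?_ (fun t => ?_) s
  · simpa only [Fin.update_snoc_last (α := fun _ => ℝ), Fin.snoc_last] using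
      hderiv (Fin.snoc z t)
  · exact measurable_softg.comp_aemeasurable hf'z.aemeasurable |>.aestronglyMeasurable
  · rw [abs_of_pos (softg_pos _)]
    exact softg_le_one_add_abs _

lemma ae_memLp_snoc {h : (Fin (k + 1) → ℝ) → ℝ} (hm : Measurable h) (h2 : MemLp h 2) :
    ∀ᵐ z : Fin k → ℝ, MemLp (fun t => h (Fin.snoc z t)) 2 := by
  have hsnoc := measurePreserving_snoc (volume : Measure ℝ) k
  filter_upwards [(hsnoc.integrable_comp_of_integrable h2.integrable_sq).prod_left_ae] with z hz
  have hmz : Measurable fun t => h (Fin.snoc z t) :=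
    hm.comp (hsnoc.measurable.comp measurable_prodMk_right)
  exact (memLp_two_iff_integrable_sq hmz.aestronglyMeasurable).2 hz

lemma integrable_integral_snoc_sq {h : (Fin (k + 1) → ℝ) → ℝ} (h2 : MemLp h 2) :
    Integrable fun z : Fin k → ℝ => ∫ t, h (Fin.snoc z t) ^ 2 :=
  ((measurePreserving_snoc (volume : Measure ℝ) k).integrable_comp_of_integrable
    h2.integrable_sq).integral_prod_right

lemma integrable_rectifiedMap_sq
    (hderiv : ∀ x, HasDerivAt (fun t => f (Function.update x (Fin.last k) t)) (f' x)
      (x (Fin.last k)))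
    (hf : Measurable f) (hf' : Measurable f') (hf2 : MemLp f 2) (hf'2 : MemLp f' 2) :
    Integrable (fun x => rectifiedMap k f f' x ^ 2) (stdGaussianPi (k + 1)) := by
  have hsnoc := measurePreserving_snoc (gaussianReal 0 1) k
  have hle := stdGaussianPi_le_volume k
  have hR := (measurable_rectifiedMap hf hf').pow_const 2
  have hweight : Integrable (fun s : ℝ => 1 + s ^ 2) (gaussianReal 0 1) :=
    (integrable_const 1).add (memLp_id_gaussianReal 2).integrable_sq
  have henergy : Integrable (fun z : Fin k → ℝ => 2 * (∫ t, f (Fin.snoc z t) ^ 2) +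
      4 * (∫ t, f' (Fin.snoc z t) ^ 2) + 4) (stdGaussianPi k) :=
    (((integrable_integral_snoc_sq hf2).mono_measure hle |>.const_mul 2).add
      ((integrable_integral_snoc_sq hf'2).mono_measure hle |>.const_mul 4)).add
      (integrable_const 4)
  rw [← hsnoc.integrable_comp hR.aestronglyMeasurable]
  refine (hweight.mul_prod henergy).mono' (hR.comp hsnoc.measurable).aestronglyMeasurable ?_
  have hslices : ∀ᵐ z ∂stdGaussianPi k,
      MemLp (fun t => f (Fin.snoc z t)) 2 ∧ MemLp (fun t => f' (Fin.snoc z t)) 2 :=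
    ae_mono hle ((ae_memLp_snoc hf hf2).and (ae_memLp_snoc hf' hf'2))
  filter_upwards [Measure.quasiMeasurePreserving_snd.ae hslices] with ⟨s, z⟩ ⟨hfz, hf'z⟩
  exact (Real.norm_of_nonneg (sq_nonneg _)).trans_le (rectifiedMap_snoc_sq_le hderiv z hfz hf'z s)

end RectifiedMap

/-- If the target density `p` satisfies `p ≤ C_π η` with `η` the standard Gaussian
density on `ℝ^d` and `g` is the modified soft-plus, then the objective
`L_k(f) = E_π[(1/2) R_k(f)(X_{1:k})² − log g(∂ₖ f(X_{1:k}))]` is finite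
(the integrand is integrable) for every `f ∈ H^{1,k}`. -/
theorem objective_finite (d k : ℕ) (hkd : k + 1 ≤ d) (Cπ : ℝ)
    (p : (Fin d → ℝ) → ℝ) (hpmeas : Measurable p) (hp0 : ∀ x, 0 ≤ p x)
    (hp : ∀ x, p x ≤ Cπ * gaussDensity d x)
    (f f' : (Fin (k + 1) → ℝ) → ℝ)
    (hf' : ∀ x : Fin (k + 1) → ℝ,
      HasDerivAt (fun t => f (Function.update x (Fin.last k) t)) (f' x) (x (Fin.last k)))
    (hfmeas : Measurable f) (hf'meas : Measurable f')
    (hfL2 : Integrable (fun x => f x ^ 2)) (hf'L2 : Integrable (fun x => f' x ^ 2)) :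
    Integrable (fun x : Fin d → ℝ =>
      ((1 / 2) * rectifiedMap k f f' (fun i => x (Fin.castLE hkd i)) ^ 2 -
        Real.log (softg (f' (fun i => x (Fin.castLE hkd i))))) * p x) := by
  have hmarginal : MeasurePreserving (fun (x : Fin d → ℝ) i => x (Fin.castLE hkd i))
      (stdGaussianPi d) (stdGaussianPi (k + 1)) :=
    measurePreserving_pi_comp_injective _ (Fin.castLE_injective hkd)
  have hf2 : MemLp f 2 := (memLp_two_iff_integrable_sq hfmeas.aestronglyMeasurable).2 hfL2
  have hf'2 : MemLp f' 2 := (memLp_two_iff_integrable_sq hf'meas.aestronglyMeasurable).2 hf'L2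
  have hquad := integrable_rectifiedMap_sq hf' hfmeas hf'meas hf2 hf'2
  have hlog := integrable_log_softg <|
    (hf'2.mono_measure (stdGaussianPi_le_volume (k + 1))).integrable one_le_two
  have hobj := hmarginal.integrable_comp_of_integrable ((hquad.const_mul (1 / 2)).sub hlog)
  rw [stdGaussianPi_eq_withDensity] at hobj
  exact integrable_mul_of_abs_le_density hpmeas (measurable_gaussDensity d)
    (gaussDensity_nonneg d) (fun x => (abs_of_nonneg (hp0 x)).trans_le (hp x)) hobj
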